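/- Under the hypotheses of the data-driven feature space dynamics theorem (N ≥ ν, T ≥ N + μ − 1 ≥ nominal data horizon, S a matrix with orthonormal columns spanning Col(Y_{N,T}), and M any matrix with M W = W⃗), let u : ℕ → ℝ^m satisfy u(k) = 0 for all k < T, and let y denote the output of the system driven by u from x0. Then the one-step output prediction error at time T satisfies y_{T−N+1:T} − S M S^⊤ y_{T−N:T−1} = C_N u_{T−N+1:T}, where u_{T−N+1:T} = (0, …, 0, u(T)). -/

import Mathlib

open Matrix

noncomputable section

/-- The observability matrix `O_N = [C; CA; …; CA^{N-1}]`, with block rows indexed by `Fin N`. -/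
def obsMat {n p : ℕ} (A : Matrix (Fin n) (Fin n) ℝ) (C : Matrix (Fin p) (Fin n) ℝ)
    (N : ℕ) : Matrix (Fin N × Fin p) (Fin n) ℝ :=
  fun ir j => (C * A ^ (ir.1 : ℕ)) ir.2 j

/-- The observability index `ν = min {N : Rank O_N = Rank O_{N+j} for all j}`. -/
def obsIndex {n p : ℕ} (A : Matrix (Fin n) (Fin n) ℝ) (C : Matrix (Fin p) (Fin n) ℝ) : ℕ :=
  sInf {N : ℕ | ∀ j : ℕ, (obsMat A C (N + j)).rank = (obsMat A C N).rank}

/-- The Krylov/excitability matrix `E_N(x) = [x, Ax, …, A^{N-1} x]`. -/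
def excMat {n : ℕ} (A : Matrix (Fin n) (Fin n) ℝ) (x : Fin n → ℝ) (N : ℕ) :
    Matrix (Fin n) (Fin N) ℝ :=
  fun i k => (A ^ (k : ℕ)).mulVec x i

/-- The excitability index at `x`: `μ(x) = min {i : Rank E_i(x) = Rank E_{i+j}(x) for all j}`. -/
def excIndexAt {n : ℕ} (A : Matrix (Fin n) (Fin n) ℝ) (x : Fin n → ℝ) : ℕ :=
  sInf {i : ℕ | ∀ j : ℕ, (excMat A x (i + j)).rank = (excMat A x i).rank}

/-- The excitability index `μ = max_{x ∈ ℝⁿ} μ(x)`. -/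
def excIndex {n : ℕ} (A : Matrix (Fin n) (Fin n) ℝ) : ℕ :=
  sSup (Set.range (excIndexAt A))

/-- The Hankel matrix `Y_{N,T}` of the nominal output `y(k) = C A^k x0`; its `j`-th column is
the stacked vector `(y(j), …, y(j+N-1))`. -/
def hankelMat {n p : ℕ} (A : Matrix (Fin n) (Fin n) ℝ) (C : Matrix (Fin p) (Fin n) ℝ)
    (x0 : Fin n → ℝ) (N T : ℕ) : Matrix (Fin N × Fin p) (Fin (T - N + 1)) ℝ :=
  fun ir j => (C * A ^ ((j : ℕ) + (ir.1 : ℕ))).mulVec x0 ir.2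

/-- The Hankel information `Γ({y(k)}) = sup {Rank Y_{N,T} : N ≤ T}`. -/
def hankelInfo {n p : ℕ} (A : Matrix (Fin n) (Fin n) ℝ) (C : Matrix (Fin p) (Fin n) ℝ)
    (x0 : Fin n → ℝ) : ℕ :=
  sSup {r : ℕ | ∃ N T : ℕ, N ≤ T ∧ r = (hankelMat A C x0 N T).rank}

/-- The block lower-triangular Toeplitz matrix `C_N` (the `(i,j)` block is `D` if `i = j`,
`C A^{i-j-1} B` if `i > j`, and `0` if `i < j`). -/
def ctrlMat {n p m : ℕ} (A : Matrix (Fin n) (Fin n) ℝ) (B : Matrix (Fin n) (Fin m) ℝ)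
    (C : Matrix (Fin p) (Fin n) ℝ) (D : Matrix (Fin p) (Fin m) ℝ) (N : ℕ) :
    Matrix (Fin N × Fin p) (Fin N × Fin m) ℝ :=
  fun ir js =>
    if (ir.1 : ℕ) = (js.1 : ℕ) then D ir.2 js.2
    else if (js.1 : ℕ) < (ir.1 : ℕ) then
      (C * A ^ ((ir.1 : ℕ) - (js.1 : ℕ) - 1) * B) ir.2 js.2
    else 0

/-- The state trajectory of `x(k+1) = A x(k) + B u(k)` from initial state `x0`. -/
def traj {n m : ℕ} (A : Matrix (Fin n) (Fin n) ℝ) (B : Matrix (Fin n) (Fin m) ℝ)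
    (u : ℕ → Fin m → ℝ) (x0 : Fin n → ℝ) : ℕ → Fin n → ℝ
  | 0 => x0
  | k + 1 => A.mulVec (traj A B u x0 k) + B.mulVec (u k)

/-- The output `y(k) = C x(k) + D u(k)` of the system driven by input `u` from `x0`. -/
def output {n p m : ℕ} (A : Matrix (Fin n) (Fin n) ℝ) (B : Matrix (Fin n) (Fin m) ℝ)
    (C : Matrix (Fin p) (Fin n) ℝ) (D : Matrix (Fin p) (Fin m) ℝ)
    (u : ℕ → Fin m → ℝ) (x0 : Fin n → ℝ) (k : ℕ) : Fin p → ℝ :=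
  C.mulVec (traj A B u x0 k) + D.mulVec (u k)

/-- The stacked nominal output vector `y_{k:k+N-1} = (y(k), …, y(k+N-1))`, `y(k) = C A^k x0`. -/
def nomStack {n p : ℕ} (A : Matrix (Fin n) (Fin n) ℝ) (C : Matrix (Fin p) (Fin n) ℝ)
    (x0 : Fin n → ℝ) (N k : ℕ) : Fin N × Fin p → ℝ :=
  fun ir => (C * A ^ (k + (ir.1 : ℕ))).mulVec x0 ir.2

theorem aux_exc_mem {n : ℕ} (A : Matrix (Fin n) (Fin n) ℝ) (x : Fin n → ℝ) {k t : ℕ}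
    (h : k < t) : (A ^ k).mulVec x ∈ LinearMap.range (excMat A x t).mulVecLin := by
  rw [Matrix.range_mulVecLin]
  exact Submodule.subset_span ⟨⟨k, h⟩, rfl⟩

theorem aux_exc_le {n : ℕ} (A : Matrix (Fin n) (Fin n) ℝ) (x : Fin n → ℝ) {t : ℕ}
    {V : Submodule ℝ (Fin n → ℝ)} (h : ∀ k < t, (A ^ k).mulVec x ∈ V) :
    LinearMap.range (excMat A x t).mulVecLin ≤ V := by
  rw [Matrix.range_mulVecLin, Submodule.span_le]
  rintro _ ⟨k, rfl⟩
  exact h k k.2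

theorem aux_CH {n : ℕ} (A : Matrix (Fin n) (Fin n) ℝ) (x : Fin n → ℝ) (j : ℕ) :
    (A ^ (n + j)).mulVec x ∈ LinearMap.range (excMat A x (n + j)).mulVecLin := by
  have h := A.aeval_self_charpoly
  rw [A.charpoly_monic.as_sum] at h
  simp only [Matrix.charpoly_natDegree_eq_dim, Fintype.card_fin, map_add, map_pow,
    Polynomial.aeval_X, map_sum, map_mul, Polynomial.aeval_C] at h
  have h2 : A ^ (n + j) =
      - ∑ i ∈ Finset.range n, A.charpoly.coeff i • A ^ (i + j) := by
    rw [pow_add, eq_neg_of_add_eq_zero_left h, neg_mul, Finset.sum_mul]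
    congr 1
    refine Finset.sum_congr rfl fun i _ => ?_
    rw [pow_add, Algebra.algebraMap_eq_smul_one, smul_mul_assoc, one_mul, smul_mul_assoc]
  have h3 : (A ^ (n + j)).mulVec x =
      - ∑ i ∈ Finset.range n, A.charpoly.coeff i • (A ^ (i + j)).mulVec x := by
    rw [h2, Matrix.neg_mulVec, Matrix.sum_mulVec]
    simp only [Matrix.smul_mulVec]
  rw [h3]
  refine Submodule.neg_mem _ (Submodule.sum_mem _ fun i hi => Submodule.smul_mem _ _ ?_)
  apply aux_exc_mem
  have := Finset.mem_range.1 hi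
  omega

theorem aux_range_mono {n : ℕ} (A : Matrix (Fin n) (Fin n) ℝ) (x : Fin n → ℝ) {s t : ℕ}
    (h : s ≤ t) : LinearMap.range (excMat A x s).mulVecLin ≤
      LinearMap.range (excMat A x t).mulVecLin :=
  aux_exc_le A x fun _ hk => aux_exc_mem A x (hk.trans_le h)

theorem aux_n_mem {n : ℕ} (A : Matrix (Fin n) (Fin n) ℝ) (x : Fin n → ℝ) :
    n ∈ {i : ℕ | ∀ j : ℕ, (excMat A x (i + j)).rank = (excMat A x i).rank} := by
  intro j
  have : LinearMap.range (excMat A x (n + j)).mulVecLin =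
      LinearMap.range (excMat A x n).mulVecLin := by
    induction j with
    | zero => rfl
    | succ j ih =>
      refine le_antisymm (aux_exc_le A x fun k hk => ?_) (aux_range_mono A x (by omega))
      rw [← ih]
      rcases Nat.lt_succ_iff_lt_or_eq.1 hk with h | h
      · exact aux_exc_mem A x h
      · rw [h]; exact aux_CH A x j
  unfold Matrix.rank
  rw [this]

theorem aux_krylov {n : ℕ} (A : Matrix (Fin n) (Fin n) ℝ) (x : Fin n → ℝ) (t : ℕ)
    (ht : excIndex A ≤ t) : ∃ c, (excMat A x t).mulVec c = (A ^ t).mulVec x := by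
  have hb : BddAbove (Set.range (excIndexAt A)) := by
    refine ⟨n, ?_⟩
    rintro _ ⟨z, rfl⟩
    exact Nat.sInf_le (aux_n_mem A z)
  have h1 : excIndexAt A x ≤ t := (le_csSup hb ⟨x, rfl⟩).trans ht
  have h2 : ∀ j : ℕ, (excMat A x (excIndexAt A x + j)).rank = (excMat A x (excIndexAt A x)).rank :=
    Nat.sInf_mem (s := {i : ℕ | ∀ j : ℕ, (excMat A x (i + j)).rank = (excMat A x i).rank})
      ⟨n, aux_n_mem A x⟩
  obtain ⟨d, rfl⟩ := Nat.exists_eq_add_of_le h1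
  have h3 : (excMat A x (excIndexAt A x + d)).rank = (excMat A x (excIndexAt A x + d + 1)).rank := by
    rw [h2 d, add_assoc, h2 (d + 1)]
  have h4 := Submodule.eq_of_le_of_finrank_eq
    (aux_range_mono A x (Nat.le_succ (excIndexAt A x + d))) h3
  have h5 := aux_exc_mem A x (Nat.lt_succ_self (excIndexAt A x + d))
  rw [← h4] at h5
  obtain ⟨c, hc⟩ := h5
  exact ⟨c, hc⟩

theorem aux_traj {n m : ℕ} (A : Matrix (Fin n) (Fin n) ℝ) (B : Matrix (Fin n) (Fin m) ℝ)
    (u : ℕ → Fin m → ℝ) (x0 : Fin n → ℝ) (T : ℕ) (hu : ∀ k : ℕ, k < T → u k = 0) :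
    ∀ k ≤ T, traj A B u x0 k = (A ^ k).mulVec x0 := by
  intro k
  induction k with
  | zero => intro _; simp [traj]
  | succ k ih =>
    intro hk
    rw [traj, ih (by omega), hu k (by omega), Matrix.mulVec_zero, add_zero, Matrix.mulVec_mulVec,
      pow_succ']

theorem aux_nom {n p : ℕ} (A : Matrix (Fin n) (Fin n) ℝ) (C : Matrix (Fin p) (Fin n) ℝ)
    (x0 : Fin n → ℝ) (N k : ℕ) :
    nomStack A C x0 N k = (obsMat A C N).mulVec ((A ^ k).mulVec x0) := by
  funext ir
  have : (obsMat A C N).mulVec ((A ^ k).mulVec x0) ir =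
    ((C * A ^ (ir.1 : ℕ)).mulVec ((A ^ k).mulVec x0)) ir.2 := rfl
  rw [this, Matrix.mulVec_mulVec, Matrix.mul_assoc, ← pow_add, add_comm]
  rfl

theorem aux_hankel {n p : ℕ} (A : Matrix (Fin n) (Fin n) ℝ) (C : Matrix (Fin p) (Fin n) ℝ)
    (x0 : Fin n → ℝ) (N T : ℕ) :
    hankelMat A C x0 N T = obsMat A C N * excMat A x0 (T - N + 1) := by
  ext ir j
  exact congrFun (aux_nom A C x0 N j) ir

theorem aux_ctrl {n p m : ℕ} (A : Matrix (Fin n) (Fin n) ℝ) (B : Matrix (Fin n) (Fin m) ℝ)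
    (C : Matrix (Fin p) (Fin n) ℝ) (D : Matrix (Fin p) (Fin m) ℝ) (N : ℕ)
    (v : ℕ → Fin m → ℝ) (h : n = 0 ∨ ∀ k, k + 1 < N → v k = 0) :
    (ctrlMat A B C D N).mulVec (fun js => v js.1 js.2) = fun ir => D.mulVec (v ir.1) ir.2 := by
  funext ir
  obtain ⟨i, r⟩ := ir
  simp only [Matrix.mulVec, dotProduct]
  rw [Fintype.sum_prod_type, Finset.sum_eq_single i]
  · simp [ctrlMat]
  · intro j _ hj
    refine Finset.sum_eq_zero fun s _ => ?_
    have hj' : (i : ℕ) ≠ j := fun h => hj (Fin.ext h.symm)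
    rcases h with h | h
    · subst h
      simp [ctrlMat, hj', Matrix.mul_apply]
    · by_cases hlt : (j : ℕ) < i
      · rw [h j (by omega)]; simp
      · simp [ctrlMat, hj', hlt]
  · simp

/-- **One-step prediction error of the data-driven monitor.** Under the hypotheses of the
data-driven feature space dynamics theorem (`N ≥ ν`, `T ≥ N + μ − 1`, `S` with orthonormal
columns spanning `Col Y_{N,T}`, and `M` any matrix with `M W = W⃗`), if `u(k) = 0` for all
`k < T` and `y` is the output of the system driven by `u` from `x0`, then
`y_{T−N+1:T} − S M Sᵀ y_{T−N:T−1} = C_N u_{T−N+1:T}` (with `u_{T−N+1:T} = (0, …, 0, u(T))`). -/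
theorem one_step_prediction_error {n p m q : ℕ}
    (A : Matrix (Fin n) (Fin n) ℝ) (B : Matrix (Fin n) (Fin m) ℝ)
    (C : Matrix (Fin p) (Fin n) ℝ) (D : Matrix (Fin p) (Fin m) ℝ)
    (x0 : Fin n → ℝ)
    (N T : ℕ) (hN : obsIndex A C ≤ N) (hT : N + excIndex A - 1 ≤ T)
    (S : Matrix (Fin N × Fin p) (Fin q) ℝ)
    (hortho : Sᵀ * S = 1)
    (hcol : LinearMap.range S.mulVecLin = LinearMap.range (hankelMat A C x0 N T).mulVecLin)
    (w : ℕ → Fin q → ℝ)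
    (hw : ∀ k : ℕ, w k = Sᵀ.mulVec (nomStack A C x0 N k))
    (W Wvec : Matrix (Fin q) (Fin (T - N + 1)) ℝ)
    (hW : ∀ i j, W i j = w (j : ℕ) i)
    (hWvec : ∀ i j, Wvec i j = w ((j : ℕ) + 1) i)
    (M : Matrix (Fin q) (Fin q) ℝ) (hM : M * W = Wvec)
    (u : ℕ → Fin m → ℝ) (hu : ∀ k : ℕ, k < T → u k = 0) :
    (fun ir : Fin N × Fin p => output A B C D u x0 (T - N + 1 + (ir.1 : ℕ)) ir.2) -
      (S * M * Sᵀ).mulVec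
        (fun ir : Fin N × Fin p => output A B C D u x0 (T - N + (ir.1 : ℕ)) ir.2) =
      (ctrlMat A B C D N).mulVec
        (fun js : Fin N × Fin m => u (T - N + 1 + (js.1 : ℕ)) js.2) := by
  have hNT : n = 0 ∨ N = 0 ∨ N + excIndex A ≤ T + 1 ∧ N ≤ T := by
    by_cases hn : n = 0
    · exact Or.inl hn
    · have : excIndex A ≠ 0 := by
        intro h0
        obtain ⟨c, hc⟩ := aux_krylov A (fun _ => 1) 0 h0.le
        rw [pow_zero, Matrix.one_mulVec] at hc
        have := congrFun hc ⟨0, Nat.pos_of_ne_zero hn⟩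
        simp [Matrix.mulVec, dotProduct] at this
      omega
  by_cases hN0 : N = 0
  · subst hN0
    funext ir
    exact ir.1.elim0
  have hout : ∀ k < T, output A B C D u x0 k = C.mulVec ((A ^ k).mulVec x0) := by
    intro k hk
    rw [output, aux_traj A B u x0 T hu k hk.le, hu k hk, Matrix.mulVec_zero, add_zero]
  rw [aux_ctrl A B C D N (fun k => u (T - N + 1 + k)) (by
    rcases hNT with h | h | h
    · exact Or.inl h
    · exact absurd h hN0
    · exact Or.inr fun k hk => hu _ (by omega))]
  rcases hNT with h | h | ⟨h, hle⟩
  · subst h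
    have hS : S = 0 := by
      have hz : hankelMat A C x0 N T = 0 := by
        ext ir j
        simp [hankelMat, Matrix.mulVec, dotProduct]
      rw [hz] at hcol
      simp only [Matrix.mulVecLin_zero, LinearMap.range_zero, LinearMap.range_eq_bot] at hcol
      exact Matrix.toLin'.injective (by simpa [Matrix.toLin'_apply'] using hcol)
    rw [hS]
    funext ir
    simp [output, Matrix.mulVec, dotProduct]
  · exact absurd h hN0
  · have e1 : (fun ir : Fin N × Fin p => output A B C D u x0 (T - N + (ir.1 : ℕ)) ir.2) =
        nomStack A C x0 N (T - N) := by
      funext ir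
      rw [hout _ (by have := ir.1.2; omega), Matrix.mulVec_mulVec]
      rfl
    have e2 : M.mulVec (w (T - N)) = w (T - N + 1) := by
      have hc : W.col (Fin.last (T - N)) = w (T - N) := by
        funext i; simp [Matrix.col, hW]
      funext i
      have := congrFun (congrFun hM i) (Fin.last (T - N))
      rw [hWvec, Matrix.mul_apply] at this
      simpa [Matrix.mulVec, dotProduct, hW] using this
    have e3 : S.mulVec (w (T - N + 1)) = nomStack A C x0 N (T - N + 1) := by
      obtain ⟨c, hc⟩ := aux_krylov A x0 (T - N + 1) (by omega)
      have hm : nomStack A C x0 N (T - N + 1) ∈ LinearMap.range S.mulVecLin := by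
        rw [hcol]
        refine ⟨c, ?_⟩
        rw [Matrix.mulVecLin_apply, aux_hankel, ← Matrix.mulVec_mulVec, hc, aux_nom]
      obtain ⟨d, hd⟩ := hm
      rw [Matrix.mulVecLin_apply] at hd
      rw [hw, ← hd, Matrix.mulVec_mulVec d Sᵀ S, hortho, Matrix.one_mulVec]
    rw [e1, ← Matrix.mulVec_mulVec, ← hw, ← Matrix.mulVec_mulVec, e2, e3]
    funext ir
    have hi := ir.1.2
    simp only [Pi.sub_apply, output]
    rw [aux_traj A B u x0 T hu _ (by omega), Matrix.mulVec_mulVec]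
    simp [nomStack]
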